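/- arXiv:1810.02839 — 2 statements merged into one kernel-verified Lean document; each statement's English description precedes it below -/
import Mathlib

section
/- Let S be a finite set of n points in the plane in general position that is not in convex position. Then every edge-labeled tree in ℒ(S) can be transformed into any other edge-labeled tree in ℒ(S) by a sequence of at most 3 simultaneous exchanges (with labels transferred along each exchange). -/
open scoped Classical

noncomputable section

/-- Points in the plane. -/
abbrev Pt : Type := ℝ × ℝ

/-- The closed straight-line segment spanned by an (unordered) edge. -/
def segOf (e : Sym2 Pt) : Set Pt :=
  Sym2.lift ⟨fun p q => segment ℝ p q, fun p q => segment_symm ℝ p q⟩ e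

/-- The set of endpoints of an edge. -/
def epts (e : Sym2 Pt) : Set Pt := {p | p ∈ e}

/-- Two edges intersect in at most common endpoints (they do not cross). -/
def NoCrossPair (e f : Sym2 Pt) : Prop := segOf e ∩ segOf f ⊆ epts e ∩ epts f

/-- A set of edges is noncrossing: any two distinct edges meet in at most a common endpoint. -/
def NoCross (E : Finset (Sym2 Pt)) : Prop := ∀ e ∈ E, ∀ f ∈ E, e ≠ f → NoCrossPair e f

/-- `E` is the edge set of a noncrossing straight-line spanning tree on the point set `S`:
all edges are nondegenerate with endpoints in `S`, pairwise noncrossing, there are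
`|S| - 1` of them, and they connect all of `S`. -/
def IsPST (S : Finset Pt) (E : Finset (Sym2 Pt)) : Prop :=
  (∀ e ∈ E, ¬ e.IsDiag ∧ ∀ p ∈ e, p ∈ S) ∧
  NoCross E ∧ E.card + 1 = S.card ∧
  ∀ p ∈ S, ∀ q ∈ S, Relation.ReflTransGen (fun a b => s(a, b) ∈ E) p q

/-- `S` is in general position: no three of its points are collinear. -/
def GenPos (S : Finset Pt) : Prop :=
  ∀ p ∈ S, ∀ q ∈ S, ∀ r ∈ S, p ≠ q → p ≠ r → q ≠ r → ¬ Collinear ℝ ({p, q, r} : Set Pt)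

/-- `S` is in convex position: every point of `S` is a vertex of the convex hull of `S`. -/
def ConvexPos (S : Finset Pt) : Prop :=
  ∀ p ∈ S, p ∉ convexHull ℝ ((S : Set Pt) \ {p})

/-- The open interior of the triangle with vertices `p`, `q`, `r`. -/
def triInt (p q r : Pt) : Set Pt := interior (convexHull ℝ ({p, q, r} : Set Pt))

/-- `y` can be reached from `x` by a sequence of at most `m` `step`-operations. -/
def ReachesIn {α : Type*} (step : α → α → Prop) (m : ℕ) (x y : α) : Prop :=
  ∃ k ≤ m, ∃ f : ℕ → α, f 0 = x ∧ f k = y ∧ ∀ i < k, step (f i) (f (i + 1))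

/-- A simultaneous rotation from `E₁` to `E₂`: a bijection `π` between the removed and the
inserted edges such that each `e` shares an endpoint with `π e` and `π e` crosses no edge
of `E₁`. -/
def SimRotation (S : Finset Pt) (E₁ E₂ : Finset (Sym2 Pt)) : Prop :=
  IsPST S E₁ ∧ IsPST S E₂ ∧ ∃ π : Sym2 Pt → Sym2 Pt,
    Set.BijOn π ↑(E₁ \ E₂) ↑(E₂ \ E₁) ∧
    ∀ e ∈ E₁ \ E₂, (∃ p, p ∈ e ∧ p ∈ π e) ∧ ∀ f ∈ E₁, NoCrossPair (π e) f

/-- An empty-triangle rotation replaces an edge `pq` by an adjacent edge `pr` such that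
no edge of either tree meets the interior of the triangle `pqr`. -/
def EmptyTriRot (S : Finset Pt) (E₁ E₂ : Finset (Sym2 Pt)) : Prop :=
  IsPST S E₁ ∧ IsPST S E₂ ∧ ∃ p q r : Pt,
    E₁ \ E₂ = {s(p, q)} ∧ E₂ \ E₁ = {s(p, r)} ∧
    ∀ g ∈ E₁ ∪ E₂, Disjoint (segOf g) (triInt p q r)

/-- A simultaneous empty-triangle rotation. -/
def SimEmptyTriRot (S : Finset Pt) (E₁ E₂ : Finset (Sym2 Pt)) : Prop :=
  IsPST S E₁ ∧ IsPST S E₂ ∧ ∃ π : Sym2 Pt → Sym2 Pt,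
    Set.BijOn π ↑(E₁ \ E₂) ↑(E₂ \ E₁) ∧
    ∀ e ∈ E₁ \ E₂, ∃ p q r : Pt, e = s(p, q) ∧ π e = s(p, r) ∧
      ∀ g ∈ E₁ ∪ E₂, Disjoint (segOf g) (triInt p q r)

/-- An edge slide replaces `pq` by `pr`, where `qr` is an edge of both trees and no edge of
either tree meets the interior of the triangle `pqr`. -/
def EdgeSlide (S : Finset Pt) (E₁ E₂ : Finset (Sym2 Pt)) : Prop :=
  IsPST S E₁ ∧ IsPST S E₂ ∧ ∃ p q r : Pt,
    E₁ \ E₂ = {s(p, q)} ∧ E₂ \ E₁ = {s(p, r)} ∧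
    s(q, r) ∈ E₁ ∧ s(q, r) ∈ E₂ ∧
    ∀ g ∈ E₁ ∪ E₂, Disjoint (segOf g) (triInt p q r)

/-- A simultaneous edge slide. -/
def SimEdgeSlide (S : Finset Pt) (E₁ E₂ : Finset (Sym2 Pt)) : Prop :=
  IsPST S E₁ ∧ IsPST S E₂ ∧ ∃ π : Sym2 Pt → Sym2 Pt,
    Set.BijOn π ↑(E₁ \ E₂) ↑(E₂ \ E₁) ∧
    ∀ e ∈ E₁ \ E₂, ∃ p q r : Pt, e = s(p, q) ∧ π e = s(p, r) ∧
      s(q, r) ∈ E₁ ∧ s(q, r) ∈ E₂ ∧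
      ∀ g ∈ E₁ ∪ E₂, Disjoint (segOf g) (triInt p q r)

/-- `e` is an edge of the convex hull of `S`: it joins two distinct points of `S` and its
segment lies on the boundary of the convex hull of `S`. -/
def IsHullEdge (S : Finset Pt) (e : Sym2 Pt) : Prop :=
  ∃ u v : Pt, e = s(u, v) ∧ u ∈ S ∧ v ∈ S ∧ u ≠ v ∧
    segment ℝ u v ⊆ frontier (convexHull ℝ (S : Set Pt))

/-- The spanning star centered at `v`. -/
def starAt (S : Finset Pt) (v : Pt) : Finset (Sym2 Pt) := (S.erase v).image (fun w => s(v, w))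

/-- An edge-labeled tree: an edge set together with a labeling function. -/
abbrev LTree := Finset (Sym2 Pt) × (Sym2 Pt → ℕ)

/-- `T` is an edge-labeled noncrossing straight-line spanning tree on `S`: its edge set is in
`𝒯(S)` and its labeling is a bijection from the edges onto `{1, …, |S| - 1}`
(normalized to `0` on non-edges). -/
def IsLabeledPST (S : Finset Pt) (T : LTree) : Prop :=
  IsPST S T.1 ∧ Set.BijOn T.2 ↑T.1 (Set.Icc 1 (S.card - 1)) ∧ ∀ e, e ∉ T.1 → T.2 e = 0

/-- A simultaneous exchange on edge-labeled trees: an arbitrary bijection between removed and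
inserted edges transferring labels, all common edges keeping their labels. -/
def LabSimExchange (S : Finset Pt) (T₁ T₂ : LTree) : Prop :=
  IsLabeledPST S T₁ ∧ IsLabeledPST S T₂ ∧ ∃ π : Sym2 Pt → Sym2 Pt,
    Set.BijOn π ↑(T₁.1 \ T₂.1) ↑(T₂.1 \ T₁.1) ∧
    (∀ e ∈ T₁.1 \ T₂.1, T₂.2 (π e) = T₁.2 e) ∧
    ∀ e ∈ T₁.1 ∩ T₂.1, T₂.2 e = T₁.2 e

/-- A rotation on edge-labeled trees: the removed and inserted edges share an endpoint and do
not cross, the label of the removed edge is transferred, and all other labels are kept. -/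
def LabRotation (S : Finset Pt) (T₁ T₂ : LTree) : Prop :=
  IsLabeledPST S T₁ ∧ IsLabeledPST S T₂ ∧ ∃ e₁ e₂ : Sym2 Pt,
    T₁.1 \ T₂.1 = {e₁} ∧ T₂.1 \ T₁.1 = {e₂} ∧
    (∃ p, p ∈ e₁ ∧ p ∈ e₂) ∧ NoCrossPair e₁ e₂ ∧
    T₂.2 e₂ = T₁.2 e₁ ∧ ∀ e ∈ T₁.1 ∩ T₂.1, T₂.2 e = T₁.2 e

/-- An edge slide on edge-labeled trees, transferring the label of the slid edge. -/
def LabEdgeSlide (S : Finset Pt) (T₁ T₂ : LTree) : Prop :=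
  IsLabeledPST S T₁ ∧ IsLabeledPST S T₂ ∧ ∃ p q r : Pt,
    T₁.1 \ T₂.1 = {s(p, q)} ∧ T₂.1 \ T₁.1 = {s(p, r)} ∧
    s(q, r) ∈ T₁.1 ∧ s(q, r) ∈ T₂.1 ∧
    (∀ g ∈ T₁.1 ∪ T₂.1, Disjoint (segOf g) (triInt p q r)) ∧
    T₂.2 (s(p, r)) = T₁.2 (s(p, q)) ∧ ∀ e ∈ T₁.1 ∩ T₂.1, T₂.2 e = T₁.2 e

/-!
It suffices to find two edge-disjoint noncrossing spanning trees `A` and `B` on `S`: the labels of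
`T` and `T'` spread to `A` and `B` so that common edges agree, and then `T → A → B → T'` are three
simultaneous exchanges, the middle one replacing every edge.

Such trees exist on every set of at least four points in general position, by induction. An
extreme point `v` sees the remaining points within an angle less than `π`, and the two points `a`
and `b` on the boundary of this angle give edges `va` and `vb` that cross no segment between
remaining points. Attach `v` to one tree by `va` and to the other one by `vb`. For four points
`v, a, b, c`, the trees `{va, ab, bc}` and `{bv, vc, ca}` start the induction.
-/

section Labels

lemma bijOn_sdiff_of_forall_inter_eq {α : Type*} {f : α → α} {s t : Set α}
    (hf : Set.BijOn f s t) (hfix : ∀ x ∈ s ∩ t, f x = x) : Set.BijOn f (s \ t) (t \ s) := by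
  convert hf.subset_right (r := t \ s) Set.sdiff_subset using 1
  ext x
  refine and_congr_right fun hxs => ⟨fun hxt => ⟨hf.mapsTo hxs, fun hfxs => hxt ?_⟩, ?_⟩
  · have hfx : f x = x := hf.injOn hfxs hxs (hfix _ ⟨hfxs, hf.mapsTo hxs⟩)
    exact hfx ▸ hf.mapsTo hxs
  · rintro ⟨-, hfxs⟩ hxt
    exact hfxs (by rwa [hfix x ⟨hxs, hxt⟩])

lemma labSimExchange_of_eqOn_inter {S : Finset Pt} {T₁ T₂ : LTree}
    (h₁ : IsLabeledPST S T₁) (h₂ : IsLabeledPST S T₂)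
    (heq : ∀ e ∈ T₁.1 ∩ T₂.1, T₂.2 e = T₁.2 e) : LabSimExchange S T₁ T₂ := by
  have : Nonempty (Sym2 Pt) := ⟨s(0, 0)⟩
  set edgeOf : ℕ → Sym2 Pt := Function.invFunOn T₂.2 T₂.1
  have hinv : Set.InvOn edgeOf T₂.2 T₂.1 (Set.Icc 1 (S.card - 1)) := h₂.2.1.invOn_invFunOn
  have hbij : Set.BijOn (edgeOf ∘ T₁.2) T₁.1 T₂.1 := (h₂.2.1.symm hinv.symm).comp h₁.2.1
  refine ⟨h₁, h₂, edgeOf ∘ T₁.2, ?_, fun e he => ?_, heq⟩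
  · push_cast
    refine bijOn_sdiff_of_forall_inter_eq hbij fun e he => ?_
    rw [Function.comp_apply, ← heq e (Finset.mem_inter.2 he)]
    exact hinv.1 he.2
  · exact hinv.2 (h₁.2.1.mapsTo (Finset.mem_sdiff.1 he).1)

lemma exists_isLabeledPST_eqOn {S : Finset Pt} {T : LTree} (hT : IsLabeledPST S T)
    {A : Finset (Sym2 Pt)} (hA : IsPST S A) :
    ∃ L : Sym2 Pt → ℕ, IsLabeledPST S (A, L) ∧ ∀ e ∈ A, e ∈ T.1 → L e = T.2 e := by
  obtain ⟨g, hg⟩ := Set.MapsTo.exists_equiv_extend_of_card_eq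
    (t := Finset.Icc 1 (S.card - 1)) (s := {e : A | (e : Sym2 Pt) ∈ T.1}) (f := fun e => T.2 e)
    (by simp [← hA.2.2.1]) (fun e he => by simpa using hT.2.1.mapsTo he)
    (fun e he f hf hef => Subtype.ext (hT.2.1.injOn he hf hef))
  set L : Sym2 Pt → ℕ := fun e => if he : e ∈ A then g ⟨e, he⟩ else 0
  have hL (e : Sym2 Pt) (he : e ∈ A) : L e = g ⟨e, he⟩ := dif_pos he
  refine ⟨L, ⟨hA, ⟨fun e he => ?_, fun e he f hf hef => ?_, fun i hi => ?_⟩,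
    fun e he => dif_neg he⟩, fun e he heT => (hL e he).trans (hg ⟨e, he⟩ heT)⟩
  · have hmem := Finset.mem_Icc.1 (g ⟨e, he⟩).2
    rwa [← hL e he] at hmem
  · have hg_eq : g ⟨e, he⟩ = g ⟨f, hf⟩ := Subtype.ext ((hL e he).symm.trans (hef.trans (hL f hf)))
    exact congrArg Subtype.val (g.injective hg_eq)
  · obtain ⟨e, he⟩ := g.surjective ⟨i, by simpa using hi⟩
    exact ⟨e, e.2, (hL e e.2).trans (congrArg Subtype.val he)⟩

lemma reachesIn_three {α : Type*} {step : α → α → Prop} {x y z w : α}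
    (hxy : step x y) (hyz : step y z) (hzw : step z w) : ReachesIn step 3 x w := by
  refine ⟨3, le_rfl, fun | 0 => x | 1 => y | 2 => z | _ => w, rfl, rfl, fun i hi => ?_⟩
  interval_cases i
  exacts [hxy, hyz, hzw]

lemma reachesIn_three_of_disjoint {S : Finset Pt} {A B : Finset (Sym2 Pt)} (hA : IsPST S A)
    (hB : IsPST S B) (hAB : Disjoint A B) {T T' : LTree} (hT : IsLabeledPST S T)
    (hT' : IsLabeledPST S T') : ReachesIn (LabSimExchange S) 3 T T' := by
  obtain ⟨L, hL, hLT⟩ := exists_isLabeledPST_eqOn hT hA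
  obtain ⟨M, hM, hMT'⟩ := exists_isLabeledPST_eqOn hT' hB
  refine reachesIn_three (labSimExchange_of_eqOn_inter hT hL fun e he => ?_)
    (labSimExchange_of_eqOn_inter hL hM fun e he => ?_)
    (labSimExchange_of_eqOn_inter hM hT' fun e he => ?_)
  · exact hLT e (Finset.mem_inter.1 he).2 (Finset.mem_inter.1 he).1
  · rw [Finset.disjoint_iff_inter_eq_empty.1 hAB] at he
    exact absurd he (Finset.notMem_empty e)
  · exact (hMT' e (Finset.mem_inter.1 he).1 (Finset.mem_inter.1 he).2).symm

end Labels

section Tangents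

variable {V : Type*} [AddCommGroup V] [Module ℝ V] {S : Finset V} {v a : V}

/-- The line through `v` and `a` is a tangent from `v` to `S` touching it at `a` only. The line is
given as a level set of a linear functional that is larger on the rest of `S`. -/
def IsTangent (S : Finset V) (v a : V) : Prop :=
  ∃ h : Module.Dual ℝ V, h a = h v ∧ ∀ s ∈ S, s ≠ a → h v < h s

lemma IsTangent.symm [DecidableEq V] (hva : IsTangent S v a) :
    IsTangent (insert v (S.erase a)) a v := by
  obtain ⟨h, hav, hS⟩ := hva
  refine ⟨h, hav.symm, fun s hs hsv => ?_⟩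
  obtain ⟨hsa, hsS⟩ := Finset.mem_erase.1 (Finset.mem_of_mem_insert_of_ne hs hsv)
  exact hav.trans_lt (hS s hsS hsa)

/-- The slope of the direction from `v` to `s`, in the coordinates in which `-f` is the abscissa
and `l` the ordinate. It is meaningful on the half-plane `f s < f v`. -/
def viewSlope (f l : Module.Dual ℝ V) (v s : V) : ℝ := l (s - v) / f (v - s)

lemma exists_mem_forall_dual_lt (hS : S.Nonempty) :
    ∃ v ∈ S, ∃ f : Module.Dual ℝ V, ∀ s ∈ S, s ≠ v → f s < f v := by
  obtain ⟨f, hf⟩ := Module.exists_dual_forall_apply_ne_zero (K := ℝ)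
    (fun p : {p : S × S // (p.1 : V) ≠ p.2} => (p.1.1 : V) - p.1.2) fun p => sub_ne_zero.2 p.2
  obtain ⟨v, hv, hmax⟩ := S.exists_max_image f hS
  refine ⟨v, hv, f, fun s hs hsv => (hmax s hs).lt_of_ne ?_⟩
  simpa [sub_eq_zero] using hf ⟨(⟨s, hs⟩, ⟨v, hv⟩), hsv⟩

variable {f l : Module.Dual ℝ V}

lemma viewSlope_eq_iff {s : V} {t : ℝ} (hf : f s < f v) :
    viewSlope f l v s = t ↔ (l + t • f) s = (l + t • f) v := by
  rw [viewSlope, div_eq_iff (by simpa [sub_eq_zero] using hf.ne')]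
  simp only [map_sub, LinearMap.add_apply, LinearMap.smul_apply, smul_eq_mul]
  constructor <;> intro h <;> linarith

lemma lt_viewSlope_iff {s : V} {t : ℝ} (hf : f s < f v) :
    t < viewSlope f l v s ↔ (l + t • f) v < (l + t • f) s := by
  rw [viewSlope, lt_div_iff₀ (by simpa using hf)]
  simp only [map_sub, LinearMap.add_apply, LinearMap.smul_apply, smul_eq_mul]
  constructor <;> intro h <;> linarith

lemma viewSlope_neg (s : V) : viewSlope f (-l) v s = -viewSlope f l v s := by
  rw [viewSlope, LinearMap.neg_apply, neg_div, viewSlope]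

lemma isTangent_of_forall_viewSlope_lt (ha : a ∈ S) (hf : ∀ s ∈ S, f s < f v)
    (hmin : ∀ s ∈ S, s ≠ a → viewSlope f l v a < viewSlope f l v s) : IsTangent S v a :=
  ⟨l + viewSlope f l v a • f, (viewSlope_eq_iff (hf a ha)).1 rfl,
    fun s hs hsa => (lt_viewSlope_iff (hf s hs)).1 (hmin s hs hsa)⟩

lemma exists_ne_isTangent_of_injOn_viewSlope (hS : S.Nontrivial) (hf : ∀ s ∈ S, f s < f v)
    (hinj : Set.InjOn (viewSlope f l v) S) :
    ∃ a ∈ S, ∃ b ∈ S, a ≠ b ∧ IsTangent S v a ∧ IsTangent S v b := by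
  obtain ⟨a, ha, hmin⟩ := S.exists_min_image (viewSlope f l v) hS.nonempty
  obtain ⟨b, hb, hmax⟩ := S.exists_max_image (viewSlope f l v) hS.nonempty
  refine ⟨a, ha, b, hb, ?_, ?_, ?_⟩
  · rintro rfl
    obtain ⟨s, hs, hsa⟩ := hS.exists_ne a
    exact hsa (hinj hs ha ((hmax s hs).antisymm (hmin s hs)))
  · exact isTangent_of_forall_viewSlope_lt ha hf fun s hs hsa =>
      (hmin s hs).lt_of_ne fun h => hsa (hinj hs ha h.symm)
  · refine isTangent_of_forall_viewSlope_lt (l := -l) hb hf fun s hs hsb => ?_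
    rw [viewSlope_neg, viewSlope_neg, neg_lt_neg_iff]
    exact (hmax s hs).lt_of_ne fun h => hsb (hinj hs hb h)

lemma collinear_of_forall_dual_eq (hV : Module.finrank ℝ V = 2) {h : Module.Dual ℝ V}
    (hh : h ≠ 0) {X : Set V} {c : ℝ} (hX : ∀ x ∈ X, h x = c) : Collinear ℝ X := by
  have : FiniteDimensional ℝ V := Module.finite_of_finrank_pos (by lia)
  have hker : Module.finrank ℝ (LinearMap.ker h) + 1 = Module.finrank ℝ V :=
    Module.Dual.finrank_ker_add_one_of_ne_zero hh
  have hspan : vectorSpan ℝ X ≤ LinearMap.ker h := by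
    refine Submodule.span_le.2 ?_
    rintro _ ⟨x, hx, y, hy, rfl⟩
    simp [hX x hx, hX y hy]
  rw [collinear_iff_finrank_le_one]
  exact (Submodule.finrank_mono hspan).trans (by lia)

lemma exists_injOn_viewSlope (hV : Module.finrank ℝ V = 2) (hf₀ : f ≠ 0)
    (hf : ∀ s ∈ S, f s < f v)
    (hcol : ∀ s ∈ S, ∀ t ∈ S, s ≠ t → ¬ Collinear ℝ ({v, s, t} : Set V)) :
    ∃ l, Set.InjOn (viewSlope f l v) S := by
  obtain ⟨l, hfl⟩ := exists_linearIndependent_pair_of_one_lt_finrank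
    (by rw [Subspace.dual_finrank_eq, hV]; norm_num) hf₀
  refine ⟨l, fun s hs t ht hst => ?_⟩
  by_contra hne
  set h : Module.Dual ℝ V := l + viewSlope f l v t • f
  have hh : h ≠ 0 := fun h₀ => one_ne_zero
    (LinearIndependent.pair_iff.1 hfl (viewSlope f l v t) 1 (by rwa [one_smul, add_comm])).2
  have hs' : h s = h v := (viewSlope_eq_iff (hf s hs)).1 hst
  have ht' : h t = h v := (viewSlope_eq_iff (hf t ht)).1 rfl
  exact hcol s hs t ht hne (collinear_of_forall_dual_eq hV hh (c := h v) (by simp [hs', ht']))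

lemma exists_mem_ne_isTangent_erase [DecidableEq V] (hV : Module.finrank ℝ V = 2)
    (hcard : 3 ≤ S.card)
    (hcol : ∀ p ∈ S, ∀ q ∈ S, ∀ r ∈ S, p ≠ q → p ≠ r → q ≠ r →
      ¬ Collinear ℝ ({p, q, r} : Set V)) :
    ∃ v ∈ S, ∃ a ∈ S.erase v, ∃ b ∈ S.erase v,
      a ≠ b ∧ IsTangent (S.erase v) v a ∧ IsTangent (S.erase v) v b := by
  obtain ⟨v, hv, f, hf⟩ := exists_mem_forall_dual_lt (S := S) (Finset.card_pos.1 (by lia))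
  have hf' : ∀ s ∈ S.erase v, f s < f v := fun s hs =>
    hf s (Finset.mem_of_mem_erase hs) (Finset.ne_of_mem_erase hs)
  have hS : (S.erase v).Nontrivial :=
    Finset.one_lt_card_iff_nontrivial.1 (by rw [Finset.card_erase_of_mem hv]; lia)
  have hf₀ : f ≠ 0 := by
    rintro rfl
    obtain ⟨s, hs⟩ := hS.nonempty
    exact (hf' s hs).false
  obtain ⟨l, hl⟩ := exists_injOn_viewSlope hV hf₀ hf' fun s hs t ht hst =>
    hcol v hv s (Finset.mem_of_mem_erase hs) t (Finset.mem_of_mem_erase ht)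
      (Finset.ne_of_mem_erase hs).symm (Finset.ne_of_mem_erase ht).symm hst
  exact ⟨v, hv, exists_ne_isTangent_of_injOn_viewSlope hS hf' hl⟩

end Tangents

section Noncrossing

lemma NoCrossPair.symm {e f : Sym2 Pt} (h : NoCrossPair e f) : NoCrossPair f e :=
  fun _ hx => (h hx.symm).symm

lemma noCrossPair_mk_iff {a b c d : Pt} : NoCrossPair s(a, b) s(c, d) ↔
    ∀ x ∈ segment ℝ a b, x ∈ segment ℝ c d → (x = a ∨ x = b) ∧ (x = c ∨ x = d) := by
  simp [NoCrossPair, segOf, epts, Set.subset_def]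

lemma linearIndependent_sub_of_not_collinear {V : Type*} [AddCommGroup V] [Module ℝ V]
    {a b c : V} (h : ¬ Collinear ℝ ({a, b, c} : Set V)) :
    LinearIndependent ℝ ![a - b, c - b] := by
  rw [LinearIndependent.pair_iff' (sub_ne_zero.2 (ne₁₂_of_not_collinear h))]
  intro t ht
  refine h ((collinear_iff_of_mem (p₀ := b) (by simp)).2 ⟨a - b, ?_⟩)
  rintro p (rfl | rfl | rfl)
  exacts [⟨1, by simp⟩, ⟨0, by simp⟩, ⟨t, by simp [ht]⟩]

lemma noCrossPair_of_not_collinear {a b c : Pt} (h : ¬ Collinear ℝ ({a, b, c} : Set Pt)) :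
    NoCrossPair s(a, b) s(b, c) := by
  rw [noCrossPair_mk_iff]
  intro x hab hbc
  have hx : x ∈ segment ℝ b a ∩ segment ℝ b c := ⟨segment_symm ℝ a b ▸ hab, hbc⟩
  rw [segment_inter_eq_endpoint_of_linearIndependent_sub ℝ
    (linearIndependent_sub_of_not_collinear h)] at hx
  exact ⟨.inr hx, .inl hx⟩

lemma IsTangent.noCrossPair {S : Finset Pt} {v a u w : Pt} (hva : IsTangent S v a) (hu : u ∈ S)
    (hw : w ∈ S) (huw : u ≠ w) : NoCrossPair s(v, a) s(u, w) := by
  obtain ⟨h, hav, hS⟩ := hva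
  have hle : ∀ s ∈ S, h v ≤ h s := fun s hs => by
    rcases eq_or_ne s a with rfl | hsa
    exacts [hav.ge, (hS s hs hsa).le]
  have eq_of_level : ∀ s ∈ S, h s = h v → s = a := fun s hs hsv => by
    by_contra hsa
    exact (hS s hs hsa).ne' hsv
  rw [noCrossPair_mk_iff]
  intro x hxva hxuw
  have hx : h x = h v := by
    obtain ⟨α, β, -, -, hαβ, rfl⟩ := hxva
    simp [hav, ← add_mul, hαβ]
  rw [← insert_endpoints_openSegment] at hxuw
  rcases hxuw with rfl | rfl | ⟨α, β, hα, hβ, hαβ, rfl⟩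
  · exact ⟨.inr (eq_of_level x hu hx), .inl rfl⟩
  · exact ⟨.inr (eq_of_level x hw hx), .inr rfl⟩
  · have hsum : α * (h u - h v) + β * (h w - h v) = 0 := by
      simp only [map_add, map_smul, smul_eq_mul] at hx
      linear_combination hx - h v * hαβ
    have hu₀ := mul_nonneg hα.le (sub_nonneg.2 (hle u hu))
    have hw₀ := mul_nonneg hβ.le (sub_nonneg.2 (hle w hw))
    have huv : h u = h v := by nlinarith
    have hwv : h w = h v := by nlinarith
    exact absurd ((eq_of_level u hu huv).trans (eq_of_level w hw hwv).symm) huw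

end Noncrossing

section Trees

variable {S : Finset Pt} {A B E : Finset (Sym2 Pt)} {v a b : Pt}

lemma IsPST.mk_notMem (hE : IsPST S E) (hv : v ∉ S) : s(v, a) ∉ E :=
  fun h => hv ((hE.1 _ h).2 v (Sym2.mem_mk_left v a))

lemma isPST_singleton (p : Pt) : IsPST {p} ∅ := by
  refine ⟨by simp, by simp [NoCross], by simp, fun x hx y hy => ?_⟩
  rw [Finset.mem_singleton.1 hx, Finset.mem_singleton.1 hy]

lemma IsPST.insert_leaf (hE : IsPST S E) (hv : v ∉ S) (ha : a ∈ S)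
    (hcross : ∀ e ∈ E, NoCrossPair s(v, a) e) : IsPST (insert v S) (insert s(v, a) E) := by
  have hnew : s(v, a) ∉ E := hE.mk_notMem hv
  obtain ⟨hends, hnc, hcard, hconn⟩ := hE
  refine ⟨?_, ?_, ?_, ?_⟩
  · rw [Finset.forall_mem_insert]
    refine ⟨⟨fun hd => hv (Sym2.mk_isDiag_iff.1 hd ▸ ha), by simp [Sym2.mem_iff, ha]⟩,
      fun e he => ⟨(hends e he).1, fun p hp => Finset.mem_insert_of_mem ((hends e he).2 p hp)⟩⟩
  · intro e he f hf hef
    rcases Finset.mem_insert.1 he with rfl | he <;> rcases Finset.mem_insert.1 hf with rfl | hf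
    · exact absurd rfl hef
    · exact hcross f hf
    · exact (hcross e he).symm
    · exact hnc e he f hf hef
  · rw [Finset.card_insert_of_notMem hnew, Finset.card_insert_of_notMem hv, hcard]
  · have hconn' : ∀ p ∈ S, ∀ q ∈ S,
        Relation.ReflTransGen (fun x y => s(x, y) ∈ insert s(v, a) E) p q := fun p hp q hq =>
      Relation.ReflTransGen.mono (fun x y => Finset.mem_insert_of_mem) _ _ (hconn p hp q hq)
    intro p hp q hq
    rcases Finset.mem_insert.1 hp with rfl | hpS <;> rcases Finset.mem_insert.1 hq with rfl | hqS
    · exact .refl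
    · exact .head (Finset.mem_insert_self _ _) (hconn' a ha q hqS)
    · exact .tail (hconn' p hpS a ha) (by simp [Sym2.eq_swap])
    · exact hconn' p hpS q hqS

lemma IsPST.insert_tangent (hE : IsPST S E) (hv : v ∉ S) (ha : a ∈ S) (hva : IsTangent S v a) :
    IsPST (insert v S) (insert s(v, a) E) := by
  refine hE.insert_leaf hv ha fun e he => ?_
  obtain ⟨hdiag, hends⟩ := hE.1 e he
  induction e with
  | _ u w => exact hva.noCrossPair (hends u (by simp)) (hends w (by simp)) (by simpa using hdiag)

lemma isPST_path_three {a b c : Pt} (h : ¬ Collinear ℝ ({a, b, c} : Set Pt)) :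
    IsPST {a, b, c} {s(a, b), s(b, c)} := by
  have hbc : IsPST {b, c} {s(b, c)} :=
    (isPST_singleton c).insert_leaf (by simpa using ne₂₃_of_not_collinear h) (by simp) (by simp)
  refine hbc.insert_leaf ?_ (by simp) (by simpa using noCrossPair_of_not_collinear h)
  simp [ne₁₂_of_not_collinear h, ne₁₃_of_not_collinear h]

lemma disjoint_insert_leaf (hA : IsPST S A) (hB : IsPST S B) (hAB : Disjoint A B) (hv : v ∉ S)
    (hab : a ≠ b) : Disjoint (insert s(v, a) A) (insert s(v, b) B) := by
  rw [Finset.disjoint_insert_left, Finset.disjoint_insert_right, Finset.mem_insert,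
    Sym2.congr_right]
  exact ⟨not_or.2 ⟨hab, hB.mk_notMem hv⟩, hA.mk_notMem hv, hAB⟩

lemma GenPos.mono {S' : Finset Pt} (hS : GenPos S) (h : S' ⊆ S) : GenPos S' :=
  fun p hp q hq r hr => hS p (h hp) q (h hq) r (h hr)

lemma exists_disjoint_isPST_four {c : Pt} (habc : ¬ Collinear ℝ ({a, b, c} : Set Pt))
    (hvca : ¬ Collinear ℝ ({v, c, a} : Set Pt)) (hvb : v ≠ b)
    (hva_tan : IsTangent {a, b, c} v a) (hvb_tan : IsTangent {a, b, c} v b) :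
    ∃ A B, IsPST {v, a, b, c} A ∧ IsPST {v, a, b, c} B ∧ Disjoint A B := by
  have hab := ne₁₂_of_not_collinear habc
  have hac := ne₁₃_of_not_collinear habc
  have hbc := ne₂₃_of_not_collinear habc
  have hvc := ne₁₂_of_not_collinear hvca
  have hva := ne₁₃_of_not_collinear hvca
  have hbv_tan : IsTangent {v, c, a} b v := by
    convert hvb_tan.symm using 1
    ext x
    simp only [Finset.mem_insert, Finset.mem_singleton, Finset.mem_erase]
    grind
  have hA : IsPST {v, a, b, c} {s(v, a), s(a, b), s(b, c)} :=
    (isPST_path_three habc).insert_tangent (by simp [hva, hvb, hvc]) (by simp) hva_tan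
  have hB : IsPST {b, v, c, a} {s(b, v), s(v, c), s(c, a)} :=
    (isPST_path_three hvca).insert_tangent (by simp [hvb.symm, hbc, hab.symm]) (by simp) hbv_tan
  have hperm : ({b, v, c, a} : Finset Pt) = {v, a, b, c} := by
    ext x
    simp only [Finset.mem_insert, Finset.mem_singleton]
    tauto
  refine ⟨_, _, hA, hperm ▸ hB, ?_⟩
  simp [hva, hvb, hvc, hab, hac, hbc, hva.symm, hvb.symm, hvc.symm, hab.symm, hac.symm, hbc.symm]

lemma GenPos.exists_disjoint_isPST_of_card_erase_eq_three (hS : GenPos S) (hv : v ∈ S)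
    (hcard : (S.erase v).card = 3) (ha : a ∈ S.erase v) (hb : b ∈ S.erase v) (hab : a ≠ b)
    (hva : IsTangent (S.erase v) v a) (hvb : IsTangent (S.erase v) v b) :
    ∃ A B, IsPST S A ∧ IsPST S B ∧ Disjoint A B := by
  obtain ⟨c, hc, hca, hcb⟩ : ∃ c ∈ S.erase v, c ≠ a ∧ c ≠ b := by
    have : (({a, b} : Finset Pt)).card < (S.erase v).card := by
      rw [Finset.card_pair hab, hcard]; norm_num
    simpa using Finset.exists_mem_notMem_of_card_lt_card this
  have herase : S.erase v = {a, b, c} := by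
    refine (Finset.eq_of_subset_of_card_le (by grind) ?_).symm
    rw [hcard, Finset.card_eq_three.2 ⟨a, b, c, hab, hca.symm, hcb.symm, rfl⟩]
  rw [herase] at hva hvb
  obtain ⟨hav, haS⟩ := Finset.mem_erase.1 ha
  obtain ⟨hbv, hbS⟩ := Finset.mem_erase.1 hb
  obtain ⟨hcv, hcS⟩ := Finset.mem_erase.1 hc
  rw [← Finset.insert_erase hv, herase]
  exact exists_disjoint_isPST_four (hS a haS b hbS c hcS hab hca.symm hcb.symm)
    (hS v hv c hcS a haS hcv.symm hav.symm hca) hbv.symm hva hvb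

theorem GenPos.exists_disjoint_isPST (hS : GenPos S) (hcard : 4 ≤ S.card) :
    ∃ A B, IsPST S A ∧ IsPST S B ∧ Disjoint A B := by
  induction S using Finset.strongInduction with
  | H S ih =>
    obtain ⟨v, hv, a, ha, b, hb, hab, hva, hvb⟩ :=
      exists_mem_ne_isTangent_erase (by simp) (by lia) hS
    have hcard_erase := Finset.card_erase_add_one hv
    obtain hthree | hfour : (S.erase v).card = 3 ∨ 4 ≤ (S.erase v).card := by lia
    · exact hS.exists_disjoint_isPST_of_card_erase_eq_three hv hthree ha hb hab hva hvb
    · have hvS : v ∉ S.erase v := Finset.notMem_erase v S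
      obtain ⟨A, B, hA, hB, hAB⟩ :=
        ih _ (Finset.erase_ssubset hv) (hS.mono (Finset.erase_subset v S)) hfour
      rw [← Finset.insert_erase hv]
      exact ⟨_, _, hA.insert_tangent hvS ha hva, hB.insert_tangent hvS hb hvb,
        disjoint_insert_leaf hA hB hAB hvS hab⟩

lemma GenPos.four_le_card_of_not_convexPos (hS : GenPos S) (hconv : ¬ ConvexPos S) :
    4 ≤ S.card := by
  unfold ConvexPos at hconv
  push Not at hconv
  obtain ⟨p, hp, hhull⟩ := hconv
  rw [← Finset.coe_erase] at hhull
  by_contra! hlt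
  have hcard := Finset.card_erase_add_one hp
  obtain h | h | h : (S.erase p).card = 0 ∨ (S.erase p).card = 1 ∨ (S.erase p).card = 2 := by lia
  · simp [Finset.card_eq_zero.1 h] at hhull
  · obtain ⟨q, hq⟩ := Finset.card_eq_one.1 h
    have hpq : p = q := by simpa [hq] using hhull
    exact Finset.notMem_erase p S (by rw [hq]; exact Finset.mem_singleton.2 hpq)
  · obtain ⟨q, r, hqr, herase⟩ := Finset.card_eq_two.1 h
    obtain ⟨hqp, hqS⟩ := Finset.mem_erase.1 (by simp [herase] : q ∈ S.erase p)
    obtain ⟨hrp, hrS⟩ := Finset.mem_erase.1 (by simp [herase] : r ∈ S.erase p)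
    rw [herase, Finset.coe_pair] at hhull
    exact hS p hp q hqS r hrS hqp.symm hrp.symm hqr
      (collinear_insert_of_mem_affineSpan_pair (convexHull_subset_affineSpan _ hhull))

end Trees

theorem stmt_15_general {S : Finset Pt} (hS : GenPos S) (hcard : 4 ≤ S.card) {T T' : LTree}
    (hT : IsLabeledPST S T) (hT' : IsLabeledPST S T') :
    ReachesIn (LabSimExchange S) 3 T T' := by
  obtain ⟨A, B, hA, hB, hAB⟩ := hS.exists_disjoint_isPST hcard
  exact reachesIn_three_of_disjoint hA hB hAB hT hT'

/-- on a point set in general but not convex position, any two edge-labeled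
trees are connected by at most `3` simultaneous exchanges. -/
theorem stmt_15 :
    ∀ S : Finset Pt, GenPos S → ¬ ConvexPos S →
      ∀ T T' : LTree, IsLabeledPST S T → IsLabeledPST S T' →
        ReachesIn (LabSimExchange S) 3 T T' :=
  fun _ hS hconv _ _ hT hT' =>
    stmt_15_general hS (hS.four_le_card_of_not_convexPos hconv) hT hT'
end
end

section
/- Let S be a finite set of at least 3 points in the plane in general position, let v ∈ S, and let T₁, T₂ ∈ ℒ(S) be two edge-labeled spanning stars both centered at v such that every edge vw has different labels in T₁ and in T₂. Then every sequence of simultaneous exchanges (with labels transferred along each exchange) transforming T₁ into T₂ has length at least 3. -/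
open scoped Classical

noncomputable section

/-!
A simultaneous exchange preserves the label of every edge it keeps, so an edge can be relabeled
only by first leaving the tree and then coming back. Every spanning tree has an edge at `v`, that
is, an edge of the star at `v`. With at most two exchanges there is at most one intermediate tree,
and the star edge it contains is never removed, so it carries the same label in `T₁` and in `T₂`.
-/

/-- `C` is a transversal of `𝒯(S)`: every noncrossing spanning tree on `S` has an edge in `C`.
It abstracts the property of stars that blocks short exchange sequences. -/
def MeetsEveryPST (S : Finset Pt) (C : Finset (Sym2 Pt)) : Prop :=
  ∀ E, IsPST S E → ∃ e ∈ E, e ∈ C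

/-- `f 0, …, f k` is a sequence of `k` simultaneous exchanges of edge-labeled trees on `S`; the
values of `f` beyond `k` are irrelevant. -/
def IsExchangeSeq (S : Finset Pt) (k : ℕ) (f : ℕ → LTree) : Prop :=
  ∀ i < k, LabSimExchange S (f i) (f (i + 1))

section Star

variable {S : Finset Pt} {E : Finset (Sym2 Pt)} {v w : Pt}

theorem IsPST.exists_mk_mem (hE : IsPST S E) (hS : S.Nontrivial) (hv : v ∈ S) :
    ∃ w, s(v, w) ∈ E := by
  obtain ⟨-, -, -, hconn⟩ := hE
  obtain ⟨w, hw, hwv⟩ := hS.exists_ne v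
  obtain hvw | ⟨u, hvu, -⟩ := (hconn v hv w hw).cases_head
  · exact absurd hvw.symm hwv
  · exact ⟨u, hvu⟩

theorem IsPST.mk_mem_starAt (hE : IsPST S E) (hvw : s(v, w) ∈ E) : s(v, w) ∈ starAt S v := by
  obtain ⟨hnd, hmem⟩ := hE.1 _ hvw
  have hne : w ≠ v := fun h => hnd (Sym2.mk_isDiag_iff.mpr h.symm)
  have hw : w ∈ S := hmem w (Sym2.mem_mk_right v w)
  exact Finset.mem_image_of_mem _ (Finset.mem_erase.mpr ⟨hne, hw⟩)

theorem meetsEveryPST_starAt (hS : S.Nontrivial) (hv : v ∈ S) :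
    MeetsEveryPST S (starAt S v) := fun _ hE =>
  let ⟨_, hvw⟩ := hE.exists_mk_mem hS hv
  ⟨_, hvw, hE.mk_mem_starAt hvw⟩

end Star

theorem LabSimExchange.label_eq {S : Finset Pt} {T T' : LTree} {e : Sym2 Pt}
    (h : LabSimExchange S T T') (he : e ∈ T.1) (he' : e ∈ T'.1) : T'.2 e = T.2 e := by
  obtain ⟨-, -, -, -, -, hkeep⟩ := h
  exact hkeep e (Finset.mem_inter.mpr ⟨he, he'⟩)

namespace IsExchangeSeq

variable {S : Finset Pt} {k i j : ℕ} {f : ℕ → LTree} {e : Sym2 Pt}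

theorem isLabeledPST (hf : IsExchangeSeq S k f) (h0 : IsLabeledPST S (f 0)) (hi : i ≤ k) :
    IsLabeledPST S (f i) := by
  cases i with
  | zero => exact h0
  | succ i => exact (hf i hi).2.1

theorem label_eq_of_le_succ (hf : IsExchangeSeq S k f) (hij : i ≤ j) (hji : j ≤ i + 1)
    (hjk : j ≤ k) (hei : e ∈ (f i).1) (hej : e ∈ (f j).1) : (f j).2 e = (f i).2 e := by
  obtain rfl | rfl : j = i ∨ j = i + 1 := by lia
  · rfl
  · exact (hf i hjk).label_eq hei hej

end IsExchangeSeq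

theorem stmt_16_general {S : Finset Pt} {C : Finset (Sym2 Pt)} {k : ℕ} {f : ℕ → LTree}
    (hC : MeetsEveryPST S C) (hf : IsExchangeSeq S k f) (h0 : IsLabeledPST S (f 0))
    (hC0 : C ⊆ (f 0).1) (hCk : C ⊆ (f k).1) (hne : ∀ e ∈ C, (f 0).2 e ≠ (f k).2 e) :
    3 ≤ k := by
  by_contra! hk
  -- For `k ≤ 2` the tree `f (k / 2)` is at most one exchange away from both `f 0` and `f k`.
  obtain ⟨e, hem, heC⟩ := hC _ (hf.isLabeledPST h0 (Nat.div_le_self k 2)).1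
  refine hne e heC ?_
  calc (f 0).2 e = (f (k / 2)).2 e :=
        (hf.label_eq_of_le_succ (by lia) (by lia) (by lia) (hC0 heC) hem).symm
    _ = (f k).2 e := (hf.label_eq_of_le_succ (by lia) (by lia) le_rfl hem (hCk heC)).symm

/-- two edge-labeled spanning stars with the same center, in which every edge
has two different labels, are at simultaneous exchange distance at least `3`. -/
theorem stmt_16 :
    ∀ S : Finset Pt, 3 ≤ S.card → GenPos S → ∀ v ∈ S,
      ∀ T₁ T₂ : LTree, IsLabeledPST S T₁ → IsLabeledPST S T₂ →
        T₁.1 = starAt S v → T₂.1 = starAt S v →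
        (∀ e ∈ T₁.1, T₁.2 e ≠ T₂.2 e) →
        ∀ (k : ℕ) (f : ℕ → LTree), f 0 = T₁ → f k = T₂ →
          (∀ i < k, LabSimExchange S (f i) (f (i + 1))) → 3 ≤ k := by
  rintro S hS - v hv _ _ h₁ - hstar₁ hstar₂ hne k f rfl rfl hf
  have hS' : S.Nontrivial := Finset.one_lt_card_iff_nontrivial.mp (by lia)
  exact stmt_16_general (meetsEveryPST_starAt hS' hv) hf h₁ hstar₁.ge hstar₂.ge (hstar₁ ▸ hne)
end
end
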